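/- Let n ≥ 3, let s > 2, and let μ be a finite Borel measure on ℝⁿ with compact support such that I_s(μ) < ∞. Then for H^{n−1}-almost every unit vector e ∈ S^{n−1}, the function r ↦ μ̂(r·e) is Lebesgue integrable over ℝ; moreover ∫_{S^{n−1}} ∫_{|r| ≥ 1} |μ̂(r·e)| dr dH^{n−1}(e) ≤ C(n, s) · I_s(μ)^{1/2} for some constant C(n, s) > 0. -/

import Mathlib

open MeasureTheory Metric Set
open scoped ENNReal RealInnerProductSpace

/-- The topological support of a measure: points all of whose neighbourhoods
have positive measure. -/
def sptm (n : ℕ) (μ : MeasureTheory.Measure (EuclideanSpace ℝ (Fin n))) :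
    Set (EuclideanSpace ℝ (Fin n)) :=
  {x | ∀ r > 0, 0 < μ (Metric.ball x r)}

/-- The `s`-energy `I_s(μ) = ∬ |x-y|^{-s} dμ(x) dμ(y)` of a measure. -/
noncomputable def energyI (n : ℕ) (s : ℝ)
    (μ : MeasureTheory.Measure (EuclideanSpace ℝ (Fin n))) : ℝ≥0∞ :=
  ∫⁻ x, ∫⁻ y, (‖x - y‖₊ : ℝ≥0∞) ^ (-s) ∂μ ∂μ

/-- The mutual `u`-energy `I_u(μ, ν) = ∬ |x-y|^{-u} dμ(x) dν(y)` of two measures. -/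
noncomputable def mutualEnergyI (n : ℕ) (u : ℝ)
    (μ ν : MeasureTheory.Measure (EuclideanSpace ℝ (Fin n))) : ℝ≥0∞ :=
  ∫⁻ x, ∫⁻ y, (‖x - y‖₊ : ℝ≥0∞) ^ (-u) ∂ν ∂μ

/-- The Fourier transform `μ̂(ξ) = ∫ e^{-2πi⟨ξ,y⟩} dμ(y)` of a measure. -/
noncomputable def ftm (n : ℕ) (μ : MeasureTheory.Measure (EuclideanSpace ℝ (Fin n)))
    (ξ : EuclideanSpace ℝ (Fin n)) : ℂ :=
  ∫ y, Complex.exp ((-2 * Real.pi * ⟪ξ, y⟫ : ℝ) * Complex.I) ∂μ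

open scoped Pointwise NNReal

section SphereMeasure

/-- Forgetting the `i`-th coordinate of a vector of `ℝ^(m+1)`. -/
def dropCoord {m : ℕ} (i : Fin (m + 1)) (x : EuclideanSpace ℝ (Fin (m + 1))) : Fin m → ℝ :=
  fun j => x (i.succAbove j)

lemma sq_norm_eq_sq_add_sum_dropCoord {m : ℕ} (i : Fin (m + 1))
    (x : EuclideanSpace ℝ (Fin (m + 1))) :
    ‖x‖ ^ 2 = x i ^ 2 + ∑ j, dropCoord i x j ^ 2 := by
  rw [EuclideanSpace.real_norm_sq_eq, Fin.sum_univ_succAbove _ i]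
  rfl

/-- On the part of the unit sphere where the `i`-th coordinate is bounded away from `0` and has
constant sign, forgetting that coordinate is antilipschitz. -/
lemma dist_le_mul_dist_dropCoord {m : ℕ} (i : Fin (m + 1)) {δ σ : ℝ} (hδ : 0 < δ)
    (hσ : |σ| = 1) {x y : EuclideanSpace ℝ (Fin (m + 1))} (hx : ‖x‖ = 1) (hy : ‖y‖ = 1)
    (hxi : δ ≤ σ * x i) (hyi : δ ≤ σ * y i) :
    dist x y ≤ (m / δ + m) * dist (dropCoord i x) (dropCoord i y) := by
  set D := dist (dropCoord i x) (dropCoord i y)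
  have hD0 : 0 ≤ D := dist_nonneg
  have hj (j : Fin m) : |dropCoord i x j - dropCoord i y j| ≤ D := by
    simpa [Real.dist_eq] using dist_le_pi_dist (dropCoord i x) (dropCoord i y) j
  have hle (z : EuclideanSpace ℝ (Fin (m + 1))) (hz : ‖z‖ = 1) (j : Fin m) :
      |dropCoord i z j| ≤ 1 := by
    simpa [hz, dropCoord] using PiLp.norm_apply_le z (i.succAbove j)
  have hi : |x i - y i| ≤ m / δ * D := by
    have h1 : (x i - y i) * (x i + y i)
        = ∑ j, (dropCoord i y j - dropCoord i x j) * (dropCoord i y j + dropCoord i x j) := by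
      have hx' := sq_norm_eq_sq_add_sum_dropCoord i x
      have hy' := sq_norm_eq_sq_add_sum_dropCoord i y
      have : ∑ j, (dropCoord i y j - dropCoord i x j) * (dropCoord i y j + dropCoord i x j)
          = ∑ j, dropCoord i y j ^ 2 - ∑ j, dropCoord i x j ^ 2 := by
        rw [← Finset.sum_sub_distrib]
        exact Finset.sum_congr rfl fun j _ => by ring
      rw [this]
      rw [hx] at hx'
      rw [hy] at hy'
      linarith
    have h2 : |∑ j, (dropCoord i y j - dropCoord i x j) * (dropCoord i y j + dropCoord i x j)|
        ≤ m * (D * 2) := by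
      refine (Finset.abs_sum_le_sum_abs _ _).trans ?_
      refine (Finset.sum_le_card_nsmul _ _ (D * 2) fun j _ => ?_).trans (by simp)
      rw [abs_mul]
      refine mul_le_mul (by rw [abs_sub_comm]; exact hj j) ?_ (abs_nonneg _) hD0
      refine (abs_add_le _ _).trans ?_
      linarith [hle x hx j, hle y hy j]
    have h3 : 2 * δ ≤ |x i + y i| := by
      calc 2 * δ ≤ σ * (x i + y i) := by linarith
        _ ≤ |σ * (x i + y i)| := le_abs_self _
        _ = |x i + y i| := by rw [abs_mul, hσ, one_mul]
    rw [← h1, abs_mul] at h2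
    have h4 : |x i - y i| * (2 * δ) ≤ m * (D * 2) :=
      (mul_le_mul_of_nonneg_left h3 (abs_nonneg _)).trans h2
    rw [div_mul_eq_mul_div, le_div_iff₀ hδ]
    linarith
  have h5 : dist x y ≤ ∑ k, |x k - y k| := by
    rw [EuclideanSpace.dist_eq]
    refine Real.sqrt_le_iff.2 ⟨Finset.sum_nonneg fun _ _ => abs_nonneg _, ?_⟩
    simp only [Real.dist_eq]
    exact Finset.sum_sq_le_sq_sum_of_nonneg fun _ _ => abs_nonneg _
  refine h5.trans ?_
  rw [Fin.sum_univ_succAbove _ i, add_mul]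
  refine add_le_add hi ?_
  exact (Finset.sum_le_card_nsmul _ _ D fun j _ => hj j).trans (by simp)

lemma hausdorffMeasure_le_volume_dropCoord_image {m : ℕ} (i : Fin (m + 1)) {δ σ : ℝ} (hδ : 0 < δ)
    (hσ : |σ| = 1) {A : Set (EuclideanSpace ℝ (Fin (m + 1)))}
    (hA : A ⊆ sphere 0 1) (hAi : ∀ x ∈ A, δ ≤ σ * x i) :
    μH[(m : ℝ)] A ≤ ENNReal.ofReal (m / δ + m) ^ (m : ℝ) * volume (dropCoord i '' A) := by
  have hanti : AntilipschitzWith (Real.toNNReal (m / δ + m)) (fun x : A => dropCoord i x.1) := by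
    refine AntilipschitzWith.of_le_mul_dist fun x y => ?_
    rw [Real.coe_toNNReal _ (by positivity)]
    exact dist_le_mul_dist_dropCoord i hδ hσ (by simpa using hA x.2) (by simpa using hA y.2)
      (hAi _ x.2) (hAi _ y.2)
  have h := hanti.le_hausdorffMeasure_image (d := m) (by positivity) univ
  rw [← isometry_subtype_coe.hausdorffMeasure_image (Or.inl (by positivity)), image_univ,
    Subtype.range_coe] at h
  have hvol : (μH[(m : ℝ)] : Measure (Fin m → ℝ)) = volume := by
    simpa using hausdorffMeasure_pi_real (ι := Fin m)
  rw [hvol] at h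
  have himg : (fun x : A => dropCoord i x.1) '' univ = dropCoord i '' A := by
    rw [image_univ, image_eq_range]
  rwa [himg] at h

/-- Polar radius together with all but one of the coordinates of the polar angle. -/
noncomputable def polarDropCoord {m : ℕ} (i : Fin (m + 1))
    (x : EuclideanSpace ℝ (Fin (m + 1))) : Fin (m + 1) → ℝ :=
  i.insertNth ‖x‖ (dropCoord i (‖x‖⁻¹ • x))

lemma lipschitzOnWith_polarDropCoord {m : ℕ} (i : Fin (m + 1)) :
    LipschitzOnWith 4 (polarDropCoord i) {x | 1 / 2 ≤ ‖x‖} := by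
  refine LipschitzOnWith.of_dist_le_mul fun x hx y hy => ?_
  simp only [mem_ofPred_eq] at hx hy
  have hx0 : 0 < ‖x‖ := by linarith
  have hy0 : 0 < ‖y‖ := by linarith
  have hxy : |‖x‖ - ‖y‖| ≤ dist x y := by rw [dist_eq_norm]; exact abs_norm_sub_norm_le x y
  have hd : 0 ≤ dist x y := dist_nonneg
  have hang : ‖‖x‖⁻¹ • x - ‖y‖⁻¹ • y‖ ≤ 4 * dist x y := by
    have h1 : ‖x‖⁻¹ • x - ‖y‖⁻¹ • y = ‖x‖⁻¹ • (x - y) + (‖x‖⁻¹ - ‖y‖⁻¹) • y := by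
      simp only [smul_sub, sub_smul]; abel
    have hinv : ‖x‖⁻¹ ≤ 2 := by rw [inv_le_comm₀ hx0 two_pos]; linarith
    rw [h1]
    refine (norm_add_le _ _).trans ?_
    have h2 : ‖(‖x‖⁻¹ - ‖y‖⁻¹) • y‖ = ‖x‖⁻¹ * |‖x‖ - ‖y‖| := by
      rw [norm_smul, Real.norm_eq_abs, inv_sub_inv hx0.ne' hy0.ne', abs_div, abs_sub_comm,
        abs_of_pos (mul_pos hx0 hy0)]
      field_simp
    rw [h2, norm_smul, norm_inv, norm_norm, ← dist_eq_norm]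
    nlinarith [inv_pos.2 hx0, mul_le_mul hinv hxy (abs_nonneg _) zero_le_two,
      mul_le_mul_of_nonneg_right hinv hd]
  change _ ≤ (4 : ℝ) * _
  refine (dist_pi_le_iff (by positivity)).2 fun k => ?_
  rcases Fin.eq_self_or_eq_succAbove i k with rfl | ⟨j, rfl⟩
  · simp only [polarDropCoord, Fin.insertNth_apply_same, Real.dist_eq]
    linarith
  · simp only [polarDropCoord, Fin.insertNth_apply_succAbove, Real.dist_eq, dropCoord]
    refine le_trans ?_ hang
    exact PiLp.norm_apply_le (‖x‖⁻¹ • x - ‖y‖⁻¹ • y) (i.succAbove j)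

lemma volume_dropCoord_image_le {m : ℕ} (i : Fin (m + 1)) :
    ∃ K : ℝ≥0, ∀ A : Set (EuclideanSpace ℝ (Fin (m + 1))), A ⊆ sphere 0 1 →
      volume (dropCoord i '' A) ≤ K * volume (Ioo (0 : ℝ) 1 • A) := by
  set κ := Measure.addHaarScalarFactor
    (μH[((m + 1 : ℕ) : ℝ)] : Measure (EuclideanSpace ℝ (Fin (m + 1)))) volume
  have hκ : (μH[((m + 1 : ℕ) : ℝ)] : Measure (EuclideanSpace ℝ (Fin (m + 1)))) = κ • volume :=
    Measure.isAddLeftInvariant_eq_smul _ _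
  refine ⟨2 * (4 ^ (m + 1) * κ), fun A hA => ?_⟩
  set U : Set (EuclideanSpace ℝ (Fin (m + 1))) := Ioo (1 / 2 : ℝ) 1 • A
  have hU : U ⊆ {x | 1 / 2 ≤ ‖x‖} := by
    rintro _ ⟨r, hr, e, he, rfl⟩
    have : ‖e‖ = 1 := by simpa using hA he
    simp only [mem_ofPred_eq, norm_smul, this, mul_one, Real.norm_eq_abs]
    exact hr.1.le.trans (le_abs_self r)
  have hpre : Ioo (1 / 2 : ℝ) 1 ×ˢ (dropCoord i '' A) ⊆
      (MeasurableEquiv.piFinSuccAbove (fun _ => ℝ) i).symm ⁻¹' (polarDropCoord i '' U) := by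
    rintro ⟨r, _⟩ ⟨hr, e, he, rfl⟩
    simp only at hr
    have he1 : ‖e‖ = 1 := by simpa using hA he
    have hr0 : 0 < r := by linarith [hr.1]
    refine ⟨r • e, ⟨r, hr, e, he, rfl⟩, ?_⟩
    have hn : ‖r • e‖ = r := by rw [norm_smul, he1, mul_one, Real.norm_eq_abs, abs_of_pos hr0]
    simp only [polarDropCoord, hn, smul_smul, inv_mul_cancel₀ hr0.ne', one_smul]
    rfl
  have h1 := (volume_preserving_piFinSuccAbove
    (fun _ : Fin (m + 1) => ℝ) i).symm.measure_preimage_equiv (polarDropCoord i '' U)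
  have h2 : volume (polarDropCoord i '' U) ≤ 4 ^ (m + 1) * (κ * volume U) := by
    have h := ((lipschitzOnWith_polarDropCoord i).mono hU).hausdorffMeasure_image_le
      (d := ((m + 1 : ℕ) : ℝ)) (by positivity)
    rw [hκ] at h
    have hvol : (μH[((m + 1 : ℕ) : ℝ)] : Measure (Fin (m + 1) → ℝ)) = volume := by
      simpa using hausdorffMeasure_pi_real (ι := Fin (m + 1))
    rw [hvol, ENNReal.rpow_natCast] at h
    exact h
  have h3 : ENNReal.ofReal (1 / 2) * volume (dropCoord i '' A) ≤ 4 ^ (m + 1) * (κ * volume U) := by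
    refine le_trans ?_ (h1.le.trans h2)
    refine le_trans (le_of_eq ?_) (measure_mono hpre)
    rw [Measure.volume_eq_prod, Measure.prod_prod, Real.volume_Ioo]
    norm_num
  have h4 : volume U ≤ volume (Ioo (0 : ℝ) 1 • A) :=
    measure_mono (smul_subset_smul_right (Ioo_subset_Ioo_left (by norm_num)))
  calc volume (dropCoord i '' A)
      = 2 * (ENNReal.ofReal (1 / 2) * volume (dropCoord i '' A)) := by
        rw [← mul_assoc, ← ENNReal.ofReal_ofNat 2, ← ENNReal.ofReal_mul (by norm_num)]
        norm_num
    _ ≤ 2 * (4 ^ (m + 1) * (κ * volume (Ioo (0 : ℝ) 1 • A))) :=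
        mul_le_mul' le_rfl (h3.trans (by gcongr))
    _ = _ := by push_cast; ring

/-- Subsets of the unit sphere have Hausdorff measure at most a constant times the volume of the
cone over them. -/
lemma exists_hausdorffMeasure_le_volume_cone (m : ℕ) :
    ∃ K : ℝ≥0, ∀ A : Set (EuclideanSpace ℝ (Fin (m + 1))), A ⊆ sphere 0 1 →
      μH[(m : ℝ)] A ≤ K * volume (Ioo (0 : ℝ) 1 • A) := by
  choose K hK using fun i : Fin (m + 1) => volume_dropCoord_image_le i
  set δ : ℝ := 1 / (m + 1) with hδdef
  have hδ : 0 < δ := by positivity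
  set c : ℝ≥0 := (Real.toNNReal (m / δ + m)) ^ m
  refine ⟨∑ i, 2 * (c * K i), fun A hA => ?_⟩
  have hcov : A ⊆ ⋃ i : Fin (m + 1), (A ∩ {x | δ ≤ 1 * x i}) ∪ (A ∩ {x | δ ≤ (-1) * x i}) := by
    intro x hx
    have hx1 : ‖x‖ = 1 := by simpa using hA hx
    obtain ⟨i, hi⟩ : ∃ i, δ ≤ |x i| := by
      by_contra! hlt
      have h1 : ∑ i, x i ^ 2 < ∑ _i : Fin (m + 1), δ := by
        refine Finset.sum_lt_sum_of_nonempty Finset.univ_nonempty fun i _ => ?_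
        have h2 : |x i| ≤ 1 := by simpa [hx1] using PiLp.norm_apply_le x i
        rw [← sq_abs]
        nlinarith [hlt i, abs_nonneg (x i)]
      rw [← EuclideanSpace.real_norm_sq_eq, hx1] at h1
      simp only [Finset.sum_const, Finset.card_univ, Fintype.card_fin, nsmul_eq_mul, hδdef] at h1
      push_cast at h1
      field_simp at h1
      norm_num at h1
    refine mem_iUnion.2 ⟨i, ?_⟩
    rcases le_abs.1 hi with h | h
    · exact Or.inl ⟨hx, by simpa using h⟩
    · exact Or.inr ⟨hx, by simpa using h⟩
  have hpiece (i : Fin (m + 1)) (σ : ℝ) (hσ : |σ| = 1) :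
      μH[(m : ℝ)] (A ∩ {x | δ ≤ σ * x i}) ≤ c * K i * volume (Ioo (0 : ℝ) 1 • A) := by
    refine (hausdorffMeasure_le_volume_dropCoord_image i hδ hσ
      (inter_subset_left.trans hA) fun x hx => hx.2).trans ?_
    rw [ENNReal.rpow_natCast, mul_assoc]
    refine mul_le_mul' (le_of_eq ?_) ?_
    · simp [c, ENNReal.ofReal]
    · exact (measure_mono (image_mono inter_subset_left)).trans (hK i A hA)
  calc μH[(m : ℝ)] A ≤ ∑ i, (μH[(m : ℝ)] (A ∩ {x | δ ≤ 1 * x i})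
        + μH[(m : ℝ)] (A ∩ {x | δ ≤ (-1) * x i})) := by
        refine (measure_mono hcov).trans ((measure_iUnion_fintype_le _ _).trans ?_)
        exact Finset.sum_le_sum fun i _ => measure_union_le _ _
    _ ≤ ∑ i, (c * K i * volume (Ioo (0 : ℝ) 1 • A) + c * K i * volume (Ioo (0 : ℝ) 1 • A)) :=
        Finset.sum_le_sum fun i _ => add_le_add (hpiece i 1 (by simp)) (hpiece i (-1) (by simp))
    _ = _ := by
        push_cast
        rw [Finset.sum_mul]
        exact Finset.sum_congr rfl fun i _ => by ring

lemma exists_hausdorffMeasure_sphere_le_toSphere (m : ℕ) :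
    ∃ K : ℝ≥0, (μH[(m : ℝ)]).restrict (sphere (0 : EuclideanSpace ℝ (Fin (m + 1))) 1) ≤
      K • (volume : Measure (EuclideanSpace ℝ (Fin (m + 1)))).toSphere.map Subtype.val := by
  obtain ⟨K, hK⟩ := exists_hausdorffMeasure_le_volume_cone m
  refine ⟨K, Measure.le_iff.2 fun A hA => ?_⟩
  rw [Measure.restrict_apply hA, Measure.smul_apply, Measure.map_apply measurable_subtype_coe hA,
    Measure.toSphere_apply' _ (measurable_subtype_coe hA), Subtype.image_preimage_coe, inter_comm]
  refine (hK _ inter_subset_left).trans ?_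
  rw [ENNReal.smul_def, smul_eq_mul]
  gcongr
  simp only [finrank_euclideanSpace, Fintype.card_fin]
  exact le_mul_of_one_le_left' (by exact_mod_cast Nat.succ_pos m)

end SphereMeasure

section FourierEnergy

variable {n : ℕ}

local notation "E" => EuclideanSpace ℝ (Fin n)

lemma norm_ftm_integrand (ξ y : E) :
    ‖Complex.exp ((-2 * Real.pi * ⟪ξ, y⟫ : ℝ) * Complex.I)‖ = 1 :=
  Complex.norm_exp_ofReal_mul_I _

lemma continuous_ftm (μ : Measure E) [IsFiniteMeasure μ] : Continuous (ftm n μ) := by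
  refine continuous_of_dominated (bound := fun _ => 1) (fun ξ => ?_) (fun ξ => ?_)
    (integrable_const 1) (ae_of_all _ fun y => ?_)
  · exact Continuous.aestronglyMeasurable (by fun_prop)
  · exact ae_of_all _ fun y => (norm_ftm_integrand ξ y).le
  · fun_prop

lemma ftm_neg (μ : Measure E) (ξ : E) : ftm n μ (-ξ) = (starRingEnd ℂ) (ftm n μ ξ) := by
  unfold ftm
  rw [← integral_conj]
  congr 1 with y
  rw [← Complex.exp_conj, map_mul, Complex.conj_ofReal, Complex.conj_I, inner_neg_left]
  push_cast
  ring_nf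

lemma integrable_exp_neg_mul_sq_norm {b : ℝ} (hb : 0 < b) :
    Integrable (fun ξ : E => Real.exp (-b * ‖ξ‖ ^ 2)) := by
  have h := (GaussianFourier.integrable_cexp_neg_mul_sq_norm_add (V := E)
    (b := b) (by simpa using hb) 0 0).norm
  refine h.congr (ae_of_all _ fun ξ => ?_)
  simp only [Complex.norm_exp]
  congr 1
  simp [← Complex.ofReal_pow]

/-- The Fourier transform of a Gaussian, in the normalization `e^{-π ‖ξ‖² / T²}`. -/
lemma integral_cexp_mul_gaussian {T : ℝ} (hT : 0 < T) (z : E) :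
    ∫ ξ : E, Complex.exp ((-2 * Real.pi * ⟪ξ, z⟫ : ℝ) * Complex.I) *
        (Real.exp (-(Real.pi / T ^ 2) * ‖ξ‖ ^ 2) : ℂ) =
      ((T ^ n * Real.exp (-Real.pi * T ^ 2 * ‖z‖ ^ 2) : ℝ) : ℂ) := by
  have hb : 0 < ((Real.pi / T ^ 2 : ℝ) : ℂ).re := by
    rw [Complex.ofReal_re]; positivity
  have h := GaussianFourier.integral_cexp_neg_mul_sq_norm_add (V := E) hb
    (-2 * Real.pi * Complex.I) z
  have hπ : (Real.pi : ℂ) ≠ 0 := by exact_mod_cast Real.pi_ne_zero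
  have hTc : (T : ℂ) ≠ 0 := by exact_mod_cast hT.ne'
  have hpow : ((Real.pi : ℂ) / ((Real.pi / T ^ 2 : ℝ) : ℂ)) ^
      ((Module.finrank ℝ E : ℂ) / 2) = (T : ℂ) ^ n := by
    have h1 : (Real.pi : ℂ) / ((Real.pi / T ^ 2 : ℝ) : ℂ) = ((T ^ 2 : ℝ) : ℂ) := by
      push_cast; field_simp
    rw [h1, finrank_euclideanSpace, Fintype.card_fin]
    have h2 : ((n : ℂ) / 2) = ((n / 2 : ℝ) : ℂ) := by push_cast; rfl
    rw [h2, ← Complex.ofReal_cpow (by positivity), ← Complex.ofReal_pow, ← Real.rpow_natCast T 2,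
      ← Real.rpow_mul hT.le]
    norm_num
    rw [mul_div_cancel₀ _ (two_ne_zero), Real.rpow_natCast]
    simp
  rw [hpow] at h
  have hexp : Complex.exp ((-2 * Real.pi * Complex.I) ^ 2 * (‖z‖ : ℂ) ^ 2 /
      (4 * ((Real.pi / T ^ 2 : ℝ) : ℂ))) = Real.exp (-Real.pi * T ^ 2 * ‖z‖ ^ 2) := by
    rw [Complex.ofReal_exp]
    congr 1
    push_cast
    rw [mul_pow, Complex.I_sq]
    field_simp
    ring
  rw [hexp] at h
  push_cast at h ⊢
  rw [← h]
  congr 1 with ξ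
  rw [← Complex.exp_add, real_inner_comm]
  congr 1
  ring

/-- Plancherel-type identity between a Gaussian energy of `μ` and a Gaussian mean of `|μ̂|²`. -/
lemma integral_sq_norm_ftm_mul_gaussian (μ : Measure E) [IsFiniteMeasure μ] {T : ℝ} (hT : 0 < T) :
    ∫ ξ : E, ‖ftm n μ ξ‖ ^ 2 * Real.exp (-(Real.pi / T ^ 2) * ‖ξ‖ ^ 2) =
      T ^ n * ∫ p : E × E, Real.exp (-Real.pi * T ^ 2 * ‖p.1 - p.2‖ ^ 2) ∂(μ.prod μ) := by
  have hb : 0 < Real.pi / T ^ 2 := by positivity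
  set F : E → E × E → ℂ := fun ξ p =>
    Complex.exp ((-2 * Real.pi * ⟪ξ, p.1 - p.2⟫ : ℝ) * Complex.I) *
        (Real.exp (-(Real.pi / T ^ 2) * ‖ξ‖ ^ 2) : ℂ) with hF
  have hsq (ξ : E) : ((‖ftm n μ ξ‖ ^ 2 * Real.exp (-(Real.pi / T ^ 2) * ‖ξ‖ ^ 2) : ℝ) : ℂ)
      = ∫ p, F ξ p ∂(μ.prod μ) := by
    simp only [hF]
    rw [integral_mul_const]
    push_cast
    rw [← Complex.mul_conj', ← ftm_neg]
    congr 1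
    simp only [ftm]
    rw [← integral_prod_mul]
    congr 1 with p
    rw [← Complex.exp_add, inner_sub_right, inner_neg_left]
    congr 1
    push_cast
    ring
  have hint : Integrable (Function.uncurry F) (volume.prod (μ.prod μ)) := by
    have hg : Integrable (fun q : E × (E × E) => Real.exp (-(Real.pi / T ^ 2) * ‖q.1‖ ^ 2) * 1)
        (volume.prod (μ.prod μ)) :=
      (integrable_exp_neg_mul_sq_norm hb).mul_prod (integrable_const (1 : ℝ))
    refine hg.mono' (Continuous.aestronglyMeasurable ?_) (ae_of_all _ fun q => ?_)
    · simp only [hF, Function.uncurry_def]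
      fun_prop
    · simp only [hF, Function.uncurry_def, norm_mul, norm_ftm_integrand, one_mul, mul_one]
      rw [Complex.norm_real, Real.norm_eq_abs, Real.abs_exp]
  apply Complex.ofReal_injective
  rw [← integral_complex_ofReal, Complex.ofReal_mul, ← integral_complex_ofReal]
  simp_rw [hsq]
  rw [integral_integral_swap hint, ← integral_const_mul]
  congr 1 with p
  simp only [hF]
  rw [integral_cexp_mul_gaussian hT, Complex.ofReal_mul]

lemma lintegral_sq_enorm_ftm_mul_gaussian (μ : Measure E) [IsFiniteMeasure μ] {T : ℝ}
    (hT : 0 < T) :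
    ∫⁻ ξ : E, ‖ftm n μ ξ‖ₑ ^ 2 * ENNReal.ofReal (Real.exp (-(Real.pi / T ^ 2) * ‖ξ‖ ^ 2)) =
      ENNReal.ofReal T ^ n *
        ∫⁻ x, ∫⁻ y, ENNReal.ofReal (Real.exp (-Real.pi * T ^ 2 * ‖x - y‖ ^ 2)) ∂μ ∂μ := by
  have hb : 0 < Real.pi / T ^ 2 := by positivity
  have hint1 : Integrable
      (fun ξ : E => ‖ftm n μ ξ‖ ^ 2 * Real.exp (-(Real.pi / T ^ 2) * ‖ξ‖ ^ 2)) := by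
    refine ((integrable_exp_neg_mul_sq_norm hb).const_mul (μ.real univ ^ 2)).mono'
      (Continuous.aestronglyMeasurable ?_) (ae_of_all _ fun ξ => ?_)
    · have := continuous_ftm μ
      fun_prop
    · rw [Real.norm_of_nonneg (by positivity)]
      gcongr
      have := norm_integral_le_of_norm_le_const (μ := μ)
        (ae_of_all _ fun y => (norm_ftm_integrand ξ y).le)
      simpa [ftm] using this
  have hint2 : Integrable
      (fun p : E × E => Real.exp (-Real.pi * T ^ 2 * ‖p.1 - p.2‖ ^ 2)) (μ.prod μ) := by
    refine (integrable_const (1 : ℝ)).mono' (Continuous.aestronglyMeasurable (by fun_prop))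
      (ae_of_all _ fun p => ?_)
    rw [Real.norm_of_nonneg (by positivity), Real.exp_le_one_iff]
    have : 0 ≤ Real.pi * T ^ 2 * ‖p.1 - p.2‖ ^ 2 := by positivity
    linarith
  have h := congrArg ENNReal.ofReal (integral_sq_norm_ftm_mul_gaussian μ hT)
  rw [ofReal_integral_eq_lintegral_ofReal hint1 (ae_of_all _ fun _ => by positivity),
    ENNReal.ofReal_mul (by positivity), ENNReal.ofReal_pow hT.le,
    ofReal_integral_eq_lintegral_ofReal hint2 (ae_of_all _ fun _ => by positivity),
    lintegral_prod _ (by fun_prop)] at h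
  rw [← h]
  congr 1 with ξ
  rw [ENNReal.ofReal_mul (by positivity), ENNReal.ofReal_pow (norm_nonneg _), ofReal_norm]

lemma rpow_mul_exp_neg_pi_sq_le {s u : ℝ} (hs : 0 < s) (hu : 0 ≤ u) :
    u ^ s * Real.exp (-Real.pi * u ^ 2) ≤ Real.exp (s ^ 2) := by
  rcases hu.eq_or_lt with rfl | hu
  · rw [Real.zero_rpow hs.ne', zero_mul]; positivity
  rw [Real.rpow_def_of_pos hu, ← Real.exp_add, Real.exp_le_exp]
  have h1 : Real.log u ≤ u := (Real.log_le_sub_one_of_pos hu).trans (by linarith)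
  have h2 := Real.pi_gt_three
  nlinarith [mul_le_mul_of_nonneg_right h1 hs.le, sq_nonneg (s - u), sq_nonneg u]

lemma gaussian_le_rpow_neg {s T : ℝ} (hs : 0 < s) (hT : 0 < T) (z : E) :
    ENNReal.ofReal (Real.exp (-Real.pi * T ^ 2 * ‖z‖ ^ 2)) ≤
      ENNReal.ofReal (Real.exp (s ^ 2) * T ^ (-s)) * (‖z‖₊ : ℝ≥0∞) ^ (-s) := by
  rcases eq_or_ne z 0 with rfl | hz
  · simp only [nnnorm_zero, ENNReal.coe_zero]
    rw [ENNReal.zero_rpow_of_neg (by linarith), ENNReal.mul_top]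
    · exact le_top
    · simpa using by positivity
  have hz' : 0 < ‖z‖ := norm_pos_iff.2 hz
  have hcoe : (‖z‖₊ : ℝ≥0∞) = ENNReal.ofReal ‖z‖ := by rw [ofReal_norm]; rfl
  rw [hcoe, ENNReal.ofReal_rpow_of_pos hz', ← ENNReal.ofReal_mul (by positivity)]
  refine ENNReal.ofReal_le_ofReal ?_
  have h := rpow_mul_exp_neg_pi_sq_le hs (u := T * ‖z‖) (by positivity)
  rw [Real.mul_rpow hT.le hz'.le, mul_pow, ← mul_assoc] at h
  rw [Real.rpow_neg hT.le, Real.rpow_neg hz'.le, mul_assoc (Real.exp (s ^ 2)), ← mul_inv,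
    ← div_eq_mul_inv, le_div_iff₀ (by positivity), mul_comm]
  exact h

/-- Mean-square decay of `μ̂` at frequency scale `T` in terms of the `s`-energy of `μ`. -/
lemma lintegral_sq_enorm_ftm_mul_gaussian_le (μ : Measure E) [IsFiniteMeasure μ] {s T : ℝ}
    (hs : 0 < s) (hT : 0 < T) :
    ∫⁻ ξ : E, ‖ftm n μ ξ‖ₑ ^ 2 * ENNReal.ofReal (Real.exp (-(Real.pi / T ^ 2) * ‖ξ‖ ^ 2)) ≤
      ENNReal.ofReal (Real.exp (s ^ 2) * T ^ (n - s)) * energyI n s μ := by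
  rw [lintegral_sq_enorm_ftm_mul_gaussian μ hT, sub_eq_add_neg, Real.rpow_add hT,
    Real.rpow_natCast, mul_left_comm, ENNReal.ofReal_mul (by positivity),
    ENNReal.ofReal_pow hT.le, mul_assoc]
  gcongr
  unfold energyI
  rw [← lintegral_const_mul' _ _ ENNReal.ofReal_ne_top]
  refine lintegral_mono fun x => ?_
  rw [← lintegral_const_mul' _ _ ENNReal.ofReal_ne_top]
  exact lintegral_mono fun y => gaussian_le_rpow_neg hs hT (x - y)

/-- `L¹` bound for `μ̂` on the dyadic annulus at scale `T`. -/
lemma lintegral_annulus_enorm_ftm_le (μ : Measure E) [IsFiniteMeasure μ] {s T : ℝ}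
    (hs : 0 < s) (hT : 0 < T) :
    ∫⁻ ξ in {ξ : E | T ≤ ‖ξ‖ ∧ ‖ξ‖ < 2 * T}, ‖ftm n μ ξ‖ₑ ≤
      (ENNReal.ofReal (Real.exp (4 * Real.pi) * Real.exp (s ^ 2) * 2 ^ n) *
        volume (ball (0 : E) 1)) ^ (1 / 2 : ℝ) *
        ENNReal.ofReal (T ^ (n - s / 2)) * energyI n s μ ^ (1 / 2 : ℝ) := by
  set A := {ξ : E | T ≤ ‖ξ‖ ∧ ‖ξ‖ < 2 * T}
  have hA : MeasurableSet A :=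
    (measurableSet_le measurable_const measurable_norm).inter
      (measurableSet_lt measurable_norm measurable_const)
  have hcs := ENNReal.lintegral_mul_le_Lp_mul_Lq (volume.restrict A) Real.HolderConjugate.two_two
    (f := fun ξ => ‖ftm n μ ξ‖ₑ) (g := fun _ => 1)
    ((continuous_ftm μ).enorm.measurable.aemeasurable) aemeasurable_const
  simp only [Pi.mul_apply, mul_one, ENNReal.rpow_ofNat, one_pow, lintegral_const, one_mul,
    Measure.restrict_apply_univ] at hcs
  have hvol : volume A ≤ ENNReal.ofReal (2 ^ n * T ^ n) * volume (ball (0 : E) 1) := by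
    have hsub : A ⊆ ball (0 : E) (2 * T) := fun ξ hξ => by simpa using hξ.2
    refine (measure_mono hsub).trans ?_
    rw [Measure.addHaar_ball_of_pos _ _ (by positivity), finrank_euclideanSpace, Fintype.card_fin,
      mul_pow]
  have hsq : ∫⁻ ξ in A, ‖ftm n μ ξ‖ₑ ^ 2 ≤
      ENNReal.ofReal (Real.exp (4 * Real.pi) * (Real.exp (s ^ 2) * T ^ (n - s))) *
        energyI n s μ := by
    rw [ENNReal.ofReal_mul (by positivity), mul_assoc]
    refine le_trans ?_ (mul_le_mul' le_rfl (lintegral_sq_enorm_ftm_mul_gaussian_le μ hs hT))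
    rw [← lintegral_const_mul' _ _ ENNReal.ofReal_ne_top]
    refine (setLIntegral_mono' hA fun ξ hξ => ?_).trans (setLIntegral_le_lintegral A _)
    rw [mul_left_comm, ← ENNReal.ofReal_mul (by positivity), ← Real.exp_add]
    refine le_mul_of_one_le_right' ?_
    rw [ENNReal.one_le_ofReal, Real.one_le_exp_iff]
    have h1 : ‖ξ‖ ^ 2 ≤ 4 * T ^ 2 := by nlinarith [hξ.2, norm_nonneg ξ]
    have h2 : Real.pi / T ^ 2 * ‖ξ‖ ^ 2 ≤ Real.pi / T ^ 2 * (4 * T ^ 2) := by gcongr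
    have h3 : Real.pi / T ^ 2 * (4 * T ^ 2) = 4 * Real.pi := by field_simp
    linarith
  refine hcs.trans ((mul_le_mul' (ENNReal.rpow_le_rpow hsq (by norm_num))
    (ENNReal.rpow_le_rpow hvol (by norm_num))).trans (le_of_eq ?_))
  have hTT : ENNReal.ofReal (T ^ (n - s / 2)) =
      ENNReal.ofReal (T ^ (n - s) * T ^ n) ^ (1 / 2 : ℝ) := by
    rw [ENNReal.ofReal_rpow_of_pos (by positivity), ← Real.rpow_natCast T n, ← Real.rpow_add hT,
      ← Real.rpow_mul hT.le]
    congr 2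
    ring
  rw [hTT, ← ENNReal.mul_rpow_of_nonneg _ _ (by norm_num),
    ← ENNReal.mul_rpow_of_nonneg _ _ (by norm_num), ← ENNReal.mul_rpow_of_nonneg _ _ (by norm_num)]
  congr 1
  rw [mul_right_comm _ (volume _), ← ENNReal.ofReal_mul (by positivity), mul_mul_mul_comm,
    mul_comm (energyI n s μ), ← ENNReal.ofReal_mul (by positivity), ← mul_assoc, mul_assoc]
  ring_nf

end FourierEnergy

section Polar

variable {n : ℕ}

local notation "E" => EuclideanSpace ℝ (Fin n)

/-- Integration in polar coordinates. -/
lemma lintegral_eq_lintegral_toSphere [Nontrivial E] {f : E → ℝ≥0∞}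
    (hf : Measurable f) :
    ∫⁻ ξ, f ξ = ∫⁻ e, (∫⁻ r in Ioi (0 : ℝ), ENNReal.ofReal (r ^ (n - 1)) * f (r • e.1))
      ∂(volume : Measure E).toSphere := by
  have hmp := (volume : Measure E).measurePreserving_homeomorphUnitSphereProd
  have hg : Measurable fun p : sphere (0 : E) 1 × Ioi (0 : ℝ) => f (p.2.1 • p.1.1) := by
    fun_prop
  calc ∫⁻ ξ, f ξ = ∫⁻ x : ({0}ᶜ : Set E), f x.1 ∂(volume.comap Subtype.val) := by
        rw [lintegral_subtype_comap (measurableSet_singleton _).compl, restrict_compl_singleton]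
    _ = ∫⁻ x : ({0}ᶜ : Set E), (fun p : sphere (0 : E) 1 × Ioi (0 : ℝ) => f (p.2.1 • p.1.1))
          (homeomorphUnitSphereProd E x) ∂(volume.comap Subtype.val) := by
        refine lintegral_congr fun x => ?_
        have hx : ‖x.1‖ ≠ 0 := norm_ne_zero_iff.2 x.2
        simp [smul_smul, hx]
    _ = ∫⁻ p, f (p.2.1 • p.1.1) ∂((volume : Measure E).toSphere.prod
          (Measure.volumeIoiPow (Module.finrank ℝ E - 1))) := hmp.lintegral_comp hg
    _ = _ := by
        rw [lintegral_prod _ hg.aemeasurable]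
        refine lintegral_congr fun e => ?_
        rw [Measure.volumeIoiPow, lintegral_withDensity_eq_lintegral_mul _ (by fun_prop)
          (by fun_prop), finrank_euclideanSpace, Fintype.card_fin]
        exact lintegral_subtype_comap measurableSet_Ioi
          fun r : ℝ => ENNReal.ofReal (r ^ (n - 1)) * f (r • e.1)

/-- The union of the dyadic annuli: a weighted `L¹` bound for `μ̂` away from the origin. -/
lemma exists_lintegral_enorm_ftm_div_norm_pow_le (m : ℕ) {s : ℝ} (hs : 2 < s) :
    ∃ K : ℝ≥0, ∀ μ : Measure (EuclideanSpace ℝ (Fin (m + 1))), IsFiniteMeasure μ →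
      ∫⁻ ξ in {ξ : EuclideanSpace ℝ (Fin (m + 1)) | 1 ≤ ‖ξ‖},
          (ENNReal.ofReal (‖ξ‖ ^ m))⁻¹ * ‖ftm (m + 1) μ ξ‖ₑ ≤
        K * energyI (m + 1) s μ ^ (1 / 2 : ℝ) := by
  set c : ℝ≥0∞ := (ENNReal.ofReal (Real.exp (4 * Real.pi) * Real.exp (s ^ 2) * 2 ^ (m + 1)) *
    volume (ball (0 : EuclideanSpace ℝ (Fin (m + 1))) 1)) ^ (1 / 2 : ℝ)
  have hcfin : c ≠ ∞ := ENNReal.rpow_ne_top_of_nonneg (by norm_num)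
    (ENNReal.mul_ne_top ENNReal.ofReal_ne_top measure_ball_lt_top.ne)
  set q : ℝ≥0∞ := ENNReal.ofReal ((2 : ℝ) ^ (1 - s / 2))
  have hq : q < 1 := by
    rw [ENNReal.ofReal_lt_one]
    exact Real.rpow_lt_one_of_one_lt_of_neg one_lt_two (by linarith)
  have hsum : ∑' k : ℕ, q ^ k ≠ ∞ := by
    rw [ENNReal.tsum_geometric]
    exact ENNReal.inv_ne_top.2 (tsub_pos_of_lt hq).ne'
  lift c * ∑' k : ℕ, q ^ k to ℝ≥0 using ENNReal.mul_ne_top hcfin hsum with K hK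
  refine ⟨K, fun μ _ => ?_⟩
  have hcov : {ξ : EuclideanSpace ℝ (Fin (m + 1)) | 1 ≤ ‖ξ‖} ⊆
      ⋃ k : ℕ, {ξ | (2 : ℝ) ^ k ≤ ‖ξ‖ ∧ ‖ξ‖ < 2 * 2 ^ k} := fun ξ hξ => by
    obtain ⟨k, hk1, hk2⟩ := exists_nat_pow_near (show 1 ≤ ‖ξ‖ from hξ) one_lt_two
    exact mem_iUnion.2 ⟨k, hk1, by rwa [← pow_succ']⟩
  have hannulus (k : ℕ) : ∫⁻ ξ in {ξ : EuclideanSpace ℝ (Fin (m + 1)) |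
        (2 : ℝ) ^ k ≤ ‖ξ‖ ∧ ‖ξ‖ < 2 * 2 ^ k}, (ENNReal.ofReal (‖ξ‖ ^ m))⁻¹ * ‖ftm (m + 1) μ ξ‖ₑ ≤
      c * energyI (m + 1) s μ ^ (1 / 2 : ℝ) * q ^ k := by
    have hT : (0 : ℝ) < 2 ^ k := by positivity
    have hTm : (0 : ℝ) < (2 ^ k) ^ m := by positivity
    have hmeas : MeasurableSet {ξ : EuclideanSpace ℝ (Fin (m + 1)) |
        (2 : ℝ) ^ k ≤ ‖ξ‖ ∧ ‖ξ‖ < 2 * 2 ^ k} :=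
      (measurableSet_le measurable_const measurable_norm).inter
        (measurableSet_lt measurable_norm measurable_const)
    have hscale : (ENNReal.ofReal ((2 ^ k) ^ m))⁻¹ *
        ENNReal.ofReal (((2 : ℝ) ^ k) ^ (((m + 1 : ℕ) : ℝ) - s / 2)) = q ^ k := by
      rw [← ENNReal.ofReal_inv_of_pos hTm, ← ENNReal.ofReal_mul (by positivity),
        ← ENNReal.ofReal_pow (by positivity)]
      congr 1
      rw [← Real.rpow_natCast (2 ^ k) m, ← Real.rpow_neg hT.le, ← Real.rpow_add hT,
        ← Real.rpow_natCast, ← Real.rpow_natCast, ← Real.rpow_mul two_pos.le,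
        ← Real.rpow_mul two_pos.le]
      congr 1
      push_cast
      ring
    calc _ ≤ ∫⁻ ξ in {ξ : EuclideanSpace ℝ (Fin (m + 1)) |
            (2 : ℝ) ^ k ≤ ‖ξ‖ ∧ ‖ξ‖ < 2 * 2 ^ k},
            (ENNReal.ofReal ((2 ^ k) ^ m))⁻¹ * ‖ftm (m + 1) μ ξ‖ₑ := by
          refine setLIntegral_mono' hmeas fun ξ hξ => ?_
          gcongr
          exact hξ.1
      _ ≤ (ENNReal.ofReal ((2 ^ k) ^ m))⁻¹ *
          (c * ENNReal.ofReal (((2 : ℝ) ^ k) ^ (((m + 1 : ℕ) : ℝ) - s / 2)) *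
            energyI (m + 1) s μ ^ (1 / 2 : ℝ)) := by
          rw [lintegral_const_mul' _ _ (by simp)]
          gcongr
          exact lintegral_annulus_enorm_ftm_le μ (by linarith) hT
      _ = _ := by
          rw [← hscale]
          ring
  calc _ ≤ ∑' k : ℕ, c * energyI (m + 1) s μ ^ (1 / 2 : ℝ) * q ^ k :=
        (lintegral_mono_set hcov).trans ((lintegral_iUnion_le _ _).trans
          (ENNReal.tsum_le_tsum hannulus))
    _ = _ := by
        rw [ENNReal.tsum_mul_left, hK]
        ring

lemma lintegral_one_le_abs_enorm_ftm_le (μ : Measure E) (e : E) :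
    ∫⁻ r in {r : ℝ | 1 ≤ |r|}, ‖ftm n μ (r • e)‖ₑ ≤
      2 * ∫⁻ r in Ici (1 : ℝ), ‖ftm n μ (r • e)‖ₑ := by
  have hset : {r : ℝ | 1 ≤ |r|} = Ici 1 ∪ Neg.neg ⁻¹' Ici 1 := by
    ext r; simp only [mem_ofPred_eq, le_abs, mem_union, mem_preimage, mem_Ici]
  rw [hset, two_mul]
  refine (lintegral_union_le _ _ _).trans (add_le_add le_rfl (le_of_eq ?_))
  have h := (Measure.measurePreserving_neg (volume : Measure ℝ)).setLIntegral_comp_preimage_emb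
    (MeasurableEquiv.neg ℝ).measurableEmbedding (fun r => ‖ftm n μ (r • e)‖ₑ) (Ici 1)
  rw [← h]
  refine lintegral_congr fun r => ?_
  rw [neg_smul, ftm_neg, ← ofReal_norm, ← ofReal_norm, RCLike.norm_conj]

end Polar

theorem stmt_19 (n : ℕ) (hn : 3 ≤ n) (s : ℝ) (hs : 2 < s) :
    ∃ C : ℝ, 0 < C ∧
      ∀ μ : Measure (EuclideanSpace ℝ (Fin n)),
        IsFiniteMeasure μ → IsCompact (sptm n μ) → energyI n s μ < ∞ →
        (∀ᵐ e ∂(μH[(n : ℝ) - 1].restrict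
            (sphere (0 : EuclideanSpace ℝ (Fin n)) 1)),
          Integrable (fun r : ℝ => ftm n μ (r • e)) volume) ∧
        (∫⁻ e in sphere (0 : EuclideanSpace ℝ (Fin n)) 1,
            (∫⁻ r in {r : ℝ | 1 ≤ |r|}, (‖ftm n μ (r • e)‖₊ : ℝ≥0∞))
              ∂μH[(n : ℝ) - 1]) ≤
          ENNReal.ofReal C * (energyI n s μ) ^ (1/2 : ℝ) := by
  obtain ⟨m, rfl⟩ : ∃ m, n = m + 1 := ⟨n - 1, by omega⟩
  obtain ⟨K₁, hK₁⟩ := exists_hausdorffMeasure_sphere_le_toSphere m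
  obtain ⟨K₂, hK₂⟩ := exists_lintegral_enorm_ftm_div_norm_pow_le m hs
  rw [show (((m + 1 : ℕ) : ℝ) - 1) = m by push_cast; ring]
  refine ⟨K₁ * (2 * K₂) + 1, by positivity, fun μ hμ _ hE => ?_⟩
  have hcont := continuous_ftm μ
  have hmeas : Measurable fun e : EuclideanSpace ℝ (Fin (m + 1)) =>
      ∫⁻ r in {r : ℝ | 1 ≤ |r|}, ‖ftm (m + 1) μ (r • e)‖ₑ :=
    Measurable.lintegral_prod_right' (f := fun p : EuclideanSpace ℝ (Fin (m + 1)) × ℝ =>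
      ‖ftm (m + 1) μ (p.2 • p.1)‖ₑ) (Continuous.measurable (by fun_prop))
  have hmain : ∫⁻ e in sphere (0 : EuclideanSpace ℝ (Fin (m + 1))) 1,
      (∫⁻ r in {r : ℝ | 1 ≤ |r|}, ‖ftm (m + 1) μ (r • e)‖ₑ) ∂μH[(m : ℝ)] ≤
        ENNReal.ofReal (K₁ * (2 * K₂) + 1) * (energyI (m + 1) s μ) ^ (1/2 : ℝ) := by
    set g : EuclideanSpace ℝ (Fin (m + 1)) → ℝ≥0∞ := indicator {ξ | 1 ≤ ‖ξ‖}
      fun ξ => (ENNReal.ofReal (‖ξ‖ ^ (m)))⁻¹ * ‖ftm (m + 1) μ ξ‖ₑ with hg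
    have hset : MeasurableSet {ξ : EuclideanSpace ℝ (Fin (m + 1)) | 1 ≤ ‖ξ‖} :=
      measurableSet_le measurable_const measurable_norm
    have hgm : Measurable g := by
      refine Measurable.indicator ?_ hset
      have := hcont.measurable
      fun_prop
    have hpolar (e : sphere (0 : EuclideanSpace ℝ (Fin (m + 1))) 1) :
        ∫⁻ r in Ici (1 : ℝ), ‖ftm (m + 1) μ (r • e.1)‖ₑ ≤
          ∫⁻ r in Ioi (0 : ℝ), ENNReal.ofReal (r ^ (m)) * g (r • e.1) := by
      refine le_trans (setLIntegral_mono' measurableSet_Ici fun r hr => ?_)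
        (lintegral_mono_set fun r (hr : 1 ≤ r) => zero_lt_one.trans_le hr)
      have hr1 : 1 ≤ r := hr
      have hr0 : 0 < r := zero_lt_one.trans_le hr
      have hn : ‖r • e.1‖ = r := by
        rw [norm_smul, norm_eq_of_mem_sphere, mul_one, Real.norm_of_nonneg hr0.le]
      rw [hg, indicator_of_mem (by simpa [hn] using hr1), hn, ← mul_assoc,
        ENNReal.mul_inv_cancel (by simpa using pow_pos hr0 _) ENNReal.ofReal_ne_top, one_mul]
    calc ∫⁻ e in sphere (0 : EuclideanSpace ℝ (Fin (m + 1))) 1,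
          (∫⁻ r in {r : ℝ | 1 ≤ |r|}, ‖ftm (m + 1) μ (r • e)‖ₑ) ∂μH[(m : ℝ)]
        ≤ K₁ * ∫⁻ e, (∫⁻ r in {r : ℝ | 1 ≤ |r|}, ‖ftm (m + 1) μ (r • e.1)‖ₑ)
            ∂(volume : Measure (EuclideanSpace ℝ (Fin (m + 1)))).toSphere := by
          refine (lintegral_mono' hK₁ le_rfl).trans ?_
          rw [lintegral_smul_measure, lintegral_map hmeas measurable_subtype_coe]
          rfl
      _ ≤ K₁ * ∫⁻ e, 2 * (∫⁻ r in Ioi (0 : ℝ), ENNReal.ofReal (r ^ (m)) * g (r • e.1))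
            ∂(volume : Measure (EuclideanSpace ℝ (Fin (m + 1)))).toSphere := by
          gcongr with e
          exact (lintegral_one_le_abs_enorm_ftm_le μ e.1).trans (mul_le_mul' le_rfl (hpolar e))
      _ = K₁ * (2 * ∫⁻ ξ, g ξ) := by
          rw [lintegral_const_mul' _ _ (by simp), lintegral_eq_lintegral_toSphere hgm,
            Nat.add_sub_cancel]
      _ ≤ K₁ * (2 * (K₂ * energyI (m + 1) s μ ^ (1 / 2 : ℝ))) := by
          gcongr
          rw [hg, lintegral_indicator hset]
          exact hK₂ μ hμ
      _ = ENNReal.ofReal (K₁ * (2 * K₂)) * energyI (m + 1) s μ ^ (1 / 2 : ℝ) := by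
          rw [ENNReal.ofReal_mul (by positivity), ENNReal.ofReal_mul (by positivity)]
          simp only [ENNReal.ofReal_coe_nnreal, ENNReal.ofReal_ofNat]
          ring
      _ ≤ _ := by
          gcongr
          linarith
  refine ⟨?_, hmain⟩
  have hlt : ENNReal.ofReal (K₁ * (2 * K₂) + 1) * (energyI (m + 1) s μ) ^ (1/2 : ℝ) < ∞ :=
    ENNReal.mul_lt_top ENNReal.ofReal_lt_top (ENNReal.rpow_lt_top_of_nonneg (by norm_num) hE.ne)
  filter_upwards [ae_lt_top hmeas (hmain.trans_lt hlt).ne] with e he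
  have hline : Continuous fun r : ℝ => ftm (m + 1) μ (r • e) := by fun_prop
  have h1 : IntegrableOn (fun r : ℝ => ftm (m + 1) μ (r • e)) {r | 1 ≤ |r|} :=
    ⟨hline.aestronglyMeasurable, he⟩
  have h2 : IntegrableOn (fun r : ℝ => ftm (m + 1) μ (r • e)) (Icc (-1) 1) :=
    hline.integrableOn_Icc
  rw [← integrableOn_univ]
  refine (h1.union h2).mono_set fun r _ => ?_
  rcases le_total 1 |r| with h | h
  · exact Or.inl h
  · exact Or.inr (abs_le.1 h)
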